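/- Let n ≥ 2, let p, q ∈ M_n with p ≠ 1, q ≠ 1 and p ≠ q, and suppose v_1 := p·x = q·y and v_2 := p·w = q·z for some letters x, y, w, z ∈ X_n. Then v_1 and v_2 are intersection bases and v_1 = v_2. -/

import Mathlib

namespace Malcev

/-- The alphabet `X_n`: letters `a, b, c, d` together with `A_i, B_i, C_i, D_i`
for `i` ranging over `Fin n` (so `A ⟨0, _⟩` represents `A_1`, etc.). -/
inductive Letter (n : ℕ) : Type
  | a | b | c | d
  | A (i : Fin n) | B (i : Fin n) | C (i : Fin n) | D (i : Fin n)
  deriving DecidableEq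

open FreeMonoid

/-- The defining relations `ρ_n`. -/
inductive rel (n : ℕ) : FreeMonoid (Letter n) → FreeMonoid (Letter n) → Prop
  | da (h : 0 < n) :
      rel n (of .d * of .a) (of (.A ⟨0, h⟩) * of (.C ⟨0, h⟩))
  | AD (i : ℕ) (h : i + 1 < n) :
      rel n (of (.A ⟨i, Nat.lt_of_succ_lt h⟩) * of (.D ⟨i, Nat.lt_of_succ_lt h⟩))
            (of (.A ⟨i + 1, h⟩) * of (.C ⟨i + 1, h⟩))
  | An (h : 0 < n) :
      rel n (of (.A ⟨n - 1, Nat.sub_lt h Nat.one_pos⟩) * of (.D ⟨n - 1, Nat.sub_lt h Nat.one_pos⟩))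
            (of .d * of .b)
  | cb (h : 0 < n) :
      rel n (of .c * of .b)
            (of (.B ⟨n - 1, Nat.sub_lt h Nat.one_pos⟩) * of (.D ⟨n - 1, Nat.sub_lt h Nat.one_pos⟩))
  | BC (i : ℕ) (h : i + 1 < n) :
      rel n (of (.B ⟨i + 1, h⟩) * of (.C ⟨i + 1, h⟩))
            (of (.B ⟨i, Nat.lt_of_succ_lt h⟩) * of (.D ⟨i, Nat.lt_of_succ_lt h⟩))

/-- The congruence on the free monoid generated by `ρ_n`. -/
def Mcon (n : ℕ) : Con (FreeMonoid (Letter n)) := conGen (rel n)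

/-- The presented monoid `M_n = Mon⟨X_n | ρ_n⟩`. -/
abbrev Mn (n : ℕ) : Type := (Mcon n).Quotient

/-- The quotient (natural) map `X_n* → M_n`. -/
def mk (n : ℕ) : FreeMonoid (Letter n) →* Mn n := (Mcon n).mk'

/-- The image in `M_n` of a single letter. -/
def gen {n : ℕ} (x : Letter n) : Mn n := mk n (of x)

/-- The image in `M_n` of a word (given as a list of letters). -/
def word {n : ℕ} (w : List (Letter n)) : Mn n := mk n (ofList w)

/-- The set `P_n = {c, d, A_1, …, A_n, B_1, …, B_n}`. -/
def inP {n : ℕ} : Letter n → Prop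
  | .c => True | .d => True | .A _ => True | .B _ => True | _ => False

/-- The set `Q_n = {a, b, C_1, …, C_n, D_1, …, D_n}`. -/
def inQ {n : ℕ} : Letter n → Prop
  | .a => True | .b => True | .C _ => True | .D _ => True | _ => False

/-- `inR x y` means the two-letter word `xy` belongs to
`R_n = {db, A_1C_1, …, A_nC_n, B_1D_1, …, B_nD_n}`. -/
def inR {n : ℕ} : Letter n → Letter n → Prop
  | .d, .b => True
  | .A i, .C j => i = j
  | .B i, .D j => i = j
  | _, _ => False

/-- `inL x y` means the two-letter word `xy` belongs to
`L_n = {cb, da, A_1D_1, …, A_nD_n, B_2C_2, …, B_nC_n}`. -/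
def inL {n : ℕ} : Letter n → Letter n → Prop
  | .c, .b => True
  | .d, .a => True
  | .A i, .D j => i = j
  | .B i, .C j => i = j ∧ 1 ≤ i.val
  | _, _ => False

/-- A word is in left normal form if no two consecutive letters form a word in `R_n`. -/
def LeftNormal {n : ℕ} (w : List (Letter n)) : Prop :=
  List.Chain' (fun x y => ¬ inR x y) w

/-- `v ∈ M_n` is an intersection base if some word `a_1 ⋯ a_m` (`m ≥ 2`) in left
normal form equals `v` in `M_n` and its final two letters form a word in `L_n`. -/
def IsIntersectionBase {n : ℕ} (v : Mn n) : Prop :=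
  ∃ (w : List (Letter n)) (x y : Letter n),
    LeftNormal (w ++ [x, y]) ∧ word (w ++ [x, y]) = v ∧ inL x y

/-- The principal right ideal `pM_n`. -/
def rIdeal {n : ℕ} (p : Mn n) : Set (Mn n) := {x | ∃ m, x = p * m}

/-!
Orient every relation from its word in `R_n` to its word in `L_n`. No two words of `R_n` overlap and
rewriting creates no new word of `R_n`, so `M_n` acts on left normal forms by appending a letter
and rewriting the last two letters at most once; acting on the empty word computes normal forms.

If `p ≠ q` and `p·x = q·y`, then `p` and `q` have normal forms `u s` and `u s'` with `s ≠ s'`, and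
`s x = s' y` is one of the defining relations. Join the first letters of the two sides of each
relation by an edge: this gives the cycle `d, A_1, …, A_n, d` and the path `B_1, …, B_n, c`.
For `n ≥ 2` the cycle has length at least three, so there are no double edges, and `s, s'`
determine the relation.
-/

section NormalForm

variable {n : ℕ}

theorem inR_iff {x y : Letter n} :
    inR x y ↔ (x = .d ∧ y = .b) ∨ (∃ i, x = .A i ∧ y = .C i) ∨ ∃ i, x = .B i ∧ y = .D i := by
  cases x <;> cases y <;> simp [inR, eq_comm]

theorem inP_of_inL {x y : Letter n} (h : inL x y) : inP x := by
  cases x <;> simp_all [inL, inP]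

theorem inP_of_inR {x y : Letter n} (h : inR x y) : inP x := by
  cases x <;> simp_all [inR, inP]

theorem inQ_of_inR {x y : Letter n} (h : inR x y) : inQ y := by
  rcases inR_iff.1 h with ⟨-, rfl⟩ | ⟨i, -, rfl⟩ | ⟨i, -, rfl⟩ <;> trivial

theorem not_inQ_of_inP {x : Letter n} (h : inP x) : ¬ inQ x := by
  cases x <;> simp_all [inP, inQ]

theorem not_inR_of_inP {x : Letter n} (h : inP x) (t : Letter n) : ¬ inR t x :=
  fun ht => not_inQ_of_inP h (inQ_of_inR ht)

theorem not_inR_of_inL {x y : Letter n} (h : inL x y) : ¬ inR x y := by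
  cases x <;> cases y <;> simp_all [inR, inL]

instance decidableInR (x y : Letter n) : Decidable (inR x y) :=
  decidable_of_iff _ inR_iff.symm

theorem mk_eq_of_rel {u v : FreeMonoid (Letter n)} (h : rel n u v) : mk n u = mk n v :=
  (Con.eq _).2 (.of _ _ h)

theorem word_reverse_cons (x : Letter n) (l : List (Letter n)) :
    word (x :: l).reverse = word l.reverse * gen x := by
  simp [word, gen, ofList_append]

theorem mul_gen_induction {motive : Mn n → Prop} (one : motive 1)
    (mul_gen : ∀ p x, motive p → motive (p * gen x)) (p : Mn n) : motive p := by
  obtain ⟨u, rfl⟩ := Con.mk'_surjective p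
  induction u using List.reverseRecOn with
  | nil => exact one
  | append_singleton u x ih => exact mul_gen _ x ih

theorem leftNormal_reverse_cons {x : Letter n} {l : List (Letter n)} :
    LeftNormal (x :: l).reverse ↔ (∀ t ∈ l.head?, ¬ inR t x) ∧ LeftNormal l.reverse :=
  List.isChain_reverse.trans (List.isChain_cons.trans (and_congr_right' List.isChain_reverse.symm))

theorem leftNormal_reverse_cons_cons {x y : Letter n} {l : List (Letter n)}
    (h : inL x y) (hl : LeftNormal l.reverse) : LeftNormal (y :: x :: l).reverse := by
  simp only [leftNormal_reverse_cons, List.head?_cons, Option.mem_some_iff, forall_eq']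
  exact ⟨not_inR_of_inL h, fun t _ => not_inR_of_inP (inP_of_inL h) t, hl⟩

theorem isIntersectionBase_word_reverse {x y : Letter n} {l : List (Letter n)}
    (h : inL x y) (hl : LeftNormal l.reverse) : IsIntersectionBase (word (y :: x :: l).reverse) :=
  ⟨l.reverse, x, y, by simpa using leftNormal_reverse_cons_cons h hl, by simp, h⟩

variable [NeZero n]

/-- The word of `L_n` paired by `ρ_n` with the word of `R_n` that starts with `s`; at most one
word of `R_n` does. The value is junk at the letters that start no word of `R_n`. -/
def contract : Letter n → Letter n × Letter n
  | .d => (.A ⟨n - 1, Nat.sub_lt (NeZero.pos n) Nat.one_pos⟩,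
      .D ⟨n - 1, Nat.sub_lt (NeZero.pos n) Nat.one_pos⟩)
  | .A ⟨0, _⟩ => (.d, .a)
  | .A ⟨i + 1, h⟩ => (.A ⟨i, Nat.lt_of_succ_lt h⟩, .D ⟨i, Nat.lt_of_succ_lt h⟩)
  | .B i => if h : i.val + 1 < n then (.B ⟨i + 1, h⟩, .C ⟨i + 1, h⟩) else (.c, .b)
  | s => (s, s)

theorem contract_B_of_lt {i : ℕ} (h : i + 1 < n) :
    contract (.B ⟨i, h.le⟩) = (.B ⟨i + 1, h⟩, .C ⟨i + 1, h⟩) := dif_pos h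

theorem contract_B_last {i : ℕ} (h : i + 1 = n) : contract (.B ⟨i, h.le⟩) = (.c, .b) :=
  dif_neg h.not_lt

theorem inL_contract {s x : Letter n} (h : inR s x) : inL (contract s).1 (contract s).2 := by
  rcases inR_iff.1 h with ⟨rfl, -⟩ | ⟨⟨_ | i, hi⟩, rfl, -⟩ | ⟨⟨i, hi⟩, rfl, -⟩
  · rfl
  · trivial
  · rfl
  · rcases (Nat.succ_le_of_lt hi).lt_or_eq with hlt | rfl
    · rw [contract_B_of_lt hlt]
      exact ⟨rfl, Nat.le_add_left 1 i⟩
    · rw [contract_B_last rfl]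
      trivial

theorem eq_of_contract_eq {s s' x y : Letter n} (h : inR s x) (h' : inR s' y)
    (e : contract s = contract s') : s = s' := by
  rcases inR_iff.1 h with ⟨rfl, -⟩ | ⟨⟨_ | i, hi⟩, rfl, -⟩ | ⟨i, rfl, -⟩ <;>
  rcases inR_iff.1 h' with ⟨rfl, -⟩ | ⟨⟨_ | j, hj⟩, rfl, -⟩ | ⟨j, rfl, -⟩ <;>
  grind [contract]

/-- The graph of first letters has no double edge. -/
theorem contract_fst_ne (hn : 2 ≤ n) {s s' x y : Letter n} (h : inR s x) (h' : inR s' y)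
    (e : (contract s).1 = s') : (contract s').1 ≠ s := by
  rcases inR_iff.1 h with ⟨rfl, -⟩ | ⟨⟨_ | i, hi⟩, rfl, -⟩ | ⟨i, rfl, -⟩ <;>
  rcases inR_iff.1 h' with ⟨rfl, -⟩ | ⟨⟨_ | j, hj⟩, rfl, -⟩ | ⟨j, rfl, -⟩ <;>
  grind [contract]

theorem gen_contract_mul_gen {s x : Letter n} (h : inR s x) :
    gen (contract s).1 * gen (contract s).2 = gen s * gen x := by
  rcases inR_iff.1 h with ⟨rfl, rfl⟩ | ⟨⟨_ | i, hi⟩, rfl, rfl⟩ | ⟨⟨i, hi⟩, rfl, rfl⟩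
  · exact mk_eq_of_rel (.An (NeZero.pos n))
  · exact mk_eq_of_rel (.da hi)
  · exact mk_eq_of_rel (.AD i hi)
  · rcases (Nat.succ_le_of_lt hi).lt_or_eq with hlt | rfl
    · rw [contract_B_of_lt hlt]
      exact mk_eq_of_rel (.BC i hlt)
    · rw [contract_B_last rfl]
      exact mk_eq_of_rel (.cb (NeZero.pos _))

/-- The rewriting of the two-letter word `s x`: the word of `L_n` paired with it if it lies in
`R_n`, and `s x` itself otherwise. -/
def reduce (s x : Letter n) : Letter n × Letter n := if inR s x then contract s else (s, x)

theorem reduce_of_inR {s x : Letter n} (h : inR s x) : reduce s x = contract s := if_pos h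

theorem reduce_of_not_inR {s x : Letter n} (h : ¬ inR s x) : reduce s x = (s, x) := if_neg h

theorem gen_reduce_mul_gen (s x : Letter n) :
    gen (reduce s x).1 * gen (reduce s x).2 = gen s * gen x := by
  by_cases h : inR s x
  · rw [reduce_of_inR h, gen_contract_mul_gen h]
  · rw [reduce_of_not_inR h]

theorem contract_eq_or_of_reduce_eq {s s' x y : Letter n} (hs : s ≠ s')
    (e : reduce s x = reduce s' y) :
    inR s x ∧ contract s = (s', y) ∨ inR s' y ∧ contract s' = (s, x) := by
  by_cases h : inR s x <;> by_cases h' : inR s' y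
  · rw [reduce_of_inR h, reduce_of_inR h'] at e
    exact absurd (eq_of_contract_eq h h' e) hs
  · rw [reduce_of_inR h, reduce_of_not_inR h'] at e
    exact .inl ⟨h, e⟩
  · rw [reduce_of_not_inR h, reduce_of_inR h'] at e
    exact .inr ⟨h', e.symm⟩
  · rw [reduce_of_not_inR h, reduce_of_not_inR h'] at e
    exact absurd (congrArg Prod.fst e) hs

theorem inL_of_reduce_eq {s s' x y : Letter n} (hs : s ≠ s') (e : reduce s x = reduce s' y) :
    inL (reduce s x).1 (reduce s x).2 := by
  rcases contract_eq_or_of_reduce_eq hs e with ⟨h, -⟩ | ⟨h, -⟩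
  · rw [reduce_of_inR h]
    exact inL_contract h
  · rw [e, reduce_of_inR h]
    exact inL_contract h

theorem reduce_eq_reduce_of_ne (hn : 2 ≤ n) {s s' x y w z : Letter n} (hs : s ≠ s')
    (e₁ : reduce s x = reduce s' y) (e₂ : reduce s w = reduce s' z) :
    reduce s x = reduce s w := by
  rcases contract_eq_or_of_reduce_eq hs e₁ with ⟨h₁, c₁⟩ | ⟨h₁, c₁⟩ <;>
    rcases contract_eq_or_of_reduce_eq hs e₂ with ⟨h₂, c₂⟩ | ⟨h₂, c₂⟩
  · rw [reduce_of_inR h₁, reduce_of_inR h₂]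
  · exact absurd (congrArg Prod.fst c₂) (contract_fst_ne hn h₁ h₂ (congrArg Prod.fst c₁))
  · exact absurd (congrArg Prod.fst c₁) (contract_fst_ne hn h₂ h₁ (congrArg Prod.fst c₂))
  · rw [e₁, e₂, reduce_of_inR h₁, reduce_of_inR h₂]

/-- Append the letter `x` to a word and rewrite its last two letters. Words are stored in reverse,
last letter first. -/
def push : List (Letter n) → Letter n → List (Letter n)
  | [], x => [x]
  | s :: l, x => (reduce s x).2 :: (reduce s x).1 :: l

theorem push_of_inP {x : Letter n} (h : inP x) (l : List (Letter n)) : push l x = x :: l := by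
  cases l with
  | nil => rfl
  | cons t l => rw [push, reduce_of_not_inR (not_inR_of_inP h t)]

theorem push_push_contract {s x : Letter n} (h : inR s x) (l : List (Letter n)) :
    push (push l (contract s).1) (contract s).2 = push (push l s) x := by
  have hL := inL_contract h
  rw [push_of_inP (inP_of_inL hL), push_of_inP (inP_of_inR h), push, push,
    reduce_of_not_inR (not_inR_of_inL hL), reduce_of_inR h]

theorem word_push (l : List (Letter n)) (x : Letter n) :
    word (push l x).reverse = word l.reverse * gen x := by
  cases l with
  | nil => exact word_reverse_cons x []
  | cons s l => simp only [push, word_reverse_cons, mul_assoc, gen_reduce_mul_gen]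

theorem leftNormal_push {l : List (Letter n)} (hl : LeftNormal l.reverse) (x : Letter n) :
    LeftNormal (push l x).reverse := by
  cases l with
  | nil => exact List.isChain_singleton x
  | cons s l =>
    by_cases h : inR s x
    · rw [push, reduce_of_inR h]
      exact leftNormal_reverse_cons_cons (inL_contract h) (leftNormal_reverse_cons.1 hl).2
    · rw [push, reduce_of_not_inR h, leftNormal_reverse_cons]
      exact ⟨by simpa using h, hl⟩

variable (n) in
/-- The right action of words on reversed words in which a letter `x` acts by `push · x`. The
opposite monoid is there because `Function.End` composes from right to left. -/
def pushHom : FreeMonoid (Letter n) →* (Function.End (List (Letter n)))ᵐᵒᵖ :=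
  FreeMonoid.lift fun x => .op fun l => push l x

theorem pushHom_contract {s x : Letter n} (h : inR s x) :
    pushHom n (of (contract s).1 * of (contract s).2) = pushHom n (of s * of x) :=
  MulOpposite.unop_injective (funext (push_push_contract h))

theorem pushHom_eq_of_rel {u v : FreeMonoid (Letter n)} (h : rel n u v) :
    pushHom n u = pushHom n v := by
  cases h with
  | da h => exact pushHom_contract (s := .A ⟨0, h⟩) (x := .C ⟨0, h⟩) rfl
  | AD i h => exact pushHom_contract (s := .A ⟨i + 1, h⟩) (x := .C ⟨i + 1, h⟩) rfl
  | An h => exact pushHom_contract (s := .d) (x := .b) trivial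
  | cb h =>
    have hn : n - 1 + 1 = n := Nat.sub_add_cancel h
    simpa only [contract_B_last hn] using
      pushHom_contract (s := .B ⟨n - 1, hn.le⟩) (x := .D ⟨n - 1, hn.le⟩) rfl
  | BC i h =>
    simpa only [contract_B_of_lt h] using
      pushHom_contract (s := .B ⟨i, h.le⟩) (x := .D ⟨i, h.le⟩) rfl

variable (n) in
/-- The right action of `M_n` on reversed words induced by `pushHom`. -/
def actionHom : Mn n →* (Function.End (List (Letter n)))ᵐᵒᵖ :=
  (Mcon n).lift (pushHom n) (Con.conGen_le.2 fun _ _ => pushHom_eq_of_rel)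

/-- The left normal form of an element of `M_n`, as a reversed word. -/
def normalForm (p : Mn n) : List (Letter n) := (actionHom n p).unop []

theorem normalForm_mul_gen (p : Mn n) (x : Letter n) :
    normalForm (p * gen x) = push (normalForm p) x := by
  rw [normalForm, map_mul]
  rfl

theorem word_normalForm (p : Mn n) : word (normalForm p).reverse = p := by
  induction p using mul_gen_induction with
  | one => rfl
  | mul_gen p x ih => rw [normalForm_mul_gen, word_push, ih]

theorem normalForm_injective : Function.Injective (normalForm (n := n)) :=
  fun p q h => by rw [← word_normalForm p, h, word_normalForm]

theorem leftNormal_normalForm (p : Mn n) : LeftNormal (normalForm p).reverse := by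
  induction p using mul_gen_induction with
  | one => exact List.isChain_nil
  | mul_gen p x ih => exact normalForm_mul_gen p x ▸ leftNormal_push ih x

theorem exists_normalForm_eq_cons_of_mul_gen_eq {p q : Mn n} (hpq : p ≠ q) {x y : Letter n}
    (h : p * gen x = q * gen y) :
    ∃ l s s', normalForm p = s :: l ∧ normalForm q = s' :: l ∧ s ≠ s' := by
  have e := congrArg normalForm h
  simp only [normalForm_mul_gen] at e
  have hne := normalForm_injective.ne hpq
  rcases hp : normalForm p with _ | ⟨s, l⟩ <;> rcases hq : normalForm q with _ | ⟨s', l'⟩ <;>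
    simp only [hp, hq, push, List.cons.injEq] at e
  · exact absurd (hp.trans hq.symm) hne
  · simp at e
  · simp at e
  · obtain ⟨-, -, rfl⟩ := e
    exact ⟨l, s, s', rfl, rfl, by rintro rfl; exact hne (hp.trans hq.symm)⟩

theorem reduce_eq_reduce_of_mul_gen_eq {p q : Mn n} {x y s s' : Letter n} {l l' : List (Letter n)}
    (hp : normalForm p = s :: l) (hq : normalForm q = s' :: l') (h : p * gen x = q * gen y) :
    reduce s x = reduce s' y := by
  have e := congrArg normalForm h
  simp only [normalForm_mul_gen, hp, hq, push, List.cons.injEq] at e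
  exact Prod.ext e.2.1 e.1

theorem isIntersectionBase_of_mul_gen_eq {p q : Mn n} (hpq : p ≠ q) {x y : Letter n}
    (h : p * gen x = q * gen y) : IsIntersectionBase (p * gen x) := by
  obtain ⟨l, s, s', hp, hq, hs⟩ := exists_normalForm_eq_cons_of_mul_gen_eq hpq h
  have hl : LeftNormal l.reverse :=
    (leftNormal_reverse_cons.1 (hp ▸ leftNormal_normalForm p)).2
  rw [← word_normalForm (p * gen x), normalForm_mul_gen, hp]
  exact isIntersectionBase_word_reverse
    (inL_of_reduce_eq hs (reduce_eq_reduce_of_mul_gen_eq hp hq h)) hl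

theorem mul_gen_eq_mul_gen_of_ne (hn : 2 ≤ n) {p q : Mn n} (hpq : p ≠ q) {x y w z : Letter n}
    (h₁ : p * gen x = q * gen y) (h₂ : p * gen w = q * gen z) : p * gen x = p * gen w := by
  obtain ⟨l, s, s', hp, hq, hs⟩ := exists_normalForm_eq_cons_of_mul_gen_eq hpq h₁
  have e : reduce s x = reduce s w := reduce_eq_reduce_of_ne hn hs
    (reduce_eq_reduce_of_mul_gen_eq hp hq h₁) (reduce_eq_reduce_of_mul_gen_eq hp hq h₂)
  apply normalForm_injective
  rw [normalForm_mul_gen, normalForm_mul_gen, hp, push, push, e]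

end NormalForm

/-- uniqueness of the intersection base for `n ≥ 2`. -/
theorem Mn_unique_intersection_base (n : ℕ) (hn : 2 ≤ n)
    (p q : Mn n) (hp : p ≠ 1) (hq : q ≠ 1) (hpq : p ≠ q)
    (x y w z : Letter n) (v₁ v₂ : Mn n)
    (h1x : v₁ = p * gen x) (h1y : v₁ = q * gen y)
    (h2w : v₂ = p * gen w) (h2z : v₂ = q * gen z) :
    IsIntersectionBase v₁ ∧ IsIntersectionBase v₂ ∧ v₁ = v₂ := by
  have : NeZero n := ⟨by omega⟩
  subst h1x h2w
  exact ⟨isIntersectionBase_of_mul_gen_eq hpq h1y, isIntersectionBase_of_mul_gen_eq hpq h2z,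
    mul_gen_eq_mul_gen_of_ne hn hpq h1y h2z⟩

end Malcev
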